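/- Let I = {p_{s,t}(x) : s,t ∈ [k], s ≥ t} be a set of k(k+1)/2 distinct monic irreducible polynomials over F_q with maximal degree Δ, let f_i(x) = ∏_{(s,t): s≥t, s≠i, t≠i} p_{s,t}(x) for i ∈ [k], let n > 2Δ·k(k−1)/2, and let γ ∈ F_{q^n} lie in no proper subfield. Then the set of polynomials {f_i(x)·f_j(x) : i,j ∈ [k], i ≥ j} is linearly independent over F_q, and V = span_{F_q}{f_1(γ),…,f_k(γ)} is a max-span Sidon space of dimension k. -/

import Mathlib

/-!
Index the polynomials by unordered pairs. The prime `p z` divides `f i` exactly when `i ∉ z`, so it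
divides `f i * f j` unless both `i` and `j` lie in `z`. Hence `p s(i, i)` divides all of these
products except `f i ^ 2`, and for `i ≠ j` the only non-square that `p s(i, j)` does not divide is
`f i * f j`: in a linear relation the coefficients of the squares vanish first, then the others.
Every linear combination of these products has degree below that of the minimal polynomial of `γ`,
so evaluation at `γ` keeps them independent.

A max-span space `V` is Sidon because every functional `φ` on `V` induces a functional `Φ` on
`V * V` with `Φ (u * v) = φ u * φ v`. If `a * b = c * d`, then every `φ` vanishing at `a` vanishes
at `c` or at `d`. The annihilator of `a` is not the union of two proper subspaces, so `c` or `d` is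
a multiple of `a`.
-/

open Polynomial

/-- A subspace `V` of a field extension `K / F` is a *Sidon space* if for all nonzero
`a, b, c, d ∈ V`, `a * b = c * d` implies `{aF, bF} = {cF, dF}`. -/
def IsSidon {F K : Type*} [Field F] [Field K] [Algebra F K] (V : Submodule F K) : Prop :=
  ∀ a ∈ V, ∀ b ∈ V, ∀ c ∈ V, ∀ d ∈ V,
    a ≠ 0 → b ≠ 0 → c ≠ 0 → d ≠ 0 → a * b = c * d →
    ({Submodule.span F {a}, Submodule.span F {b}} : Set (Submodule F K)) =
      {Submodule.span F {c}, Submodule.span F {d}}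

open Module Submodule

theorem map_sym2Mul {G M N ι : Type*} [CommMagma M] [CommMagma N] [FunLike G M N]
    [MulHomClass G M N] (φ : G) (v : ι → M) (z : Sym2 ι) :
    φ (z.map v).mul = (z.map fun i => φ (v i)).mul := by
  induction z with | _ i j
  exact map_mul φ (v i) (v j)

section Sidon

variable {F A ι : Type*} [Field F] [CommRing A] [Algebra F A]

theorem span_range_mul_span_range (v : ι → A) :
    span F (Set.range v) * span F (Set.range v) =
      span F (Set.range fun z : Sym2 ι => (z.map v).mul) := by
  rw [span_mul_span]
  congr 1
  ext y
  constructor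
  · rintro ⟨_, ⟨i, rfl⟩, _, ⟨j, rfl⟩, rfl⟩
    exact ⟨s(i, j), rfl⟩
  · rintro ⟨⟨i, j⟩, rfl⟩
    exact Set.mul_mem_mul ⟨i, rfl⟩ ⟨j, rfl⟩

theorem linearIndependent_of_sym2Mul {v : ι → A}
    (hv : LinearIndependent F fun z : Sym2 ι => (z.map v).mul) : LinearIndependent F v := by
  cases isEmpty_or_nonempty ι with
  | inl _ => exact linearIndependent_empty_type
  | inr hι =>
    obtain ⟨j⟩ := hι
    have hvj : LinearIndependent F fun i => v i * v j :=
      hv.comp (fun i => s(i, j)) fun _ _ h => Sym2.congr_left.mp h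
    exact LinearIndependent.of_comp (LinearMap.mulRight F (v j)) hvj

/-- A subspace `V` of an `F`-algebra is *max-span* if the span `V * V` of the products of its
elements has the largest dimension `k * (k + 1) / 2` that `k = dim V` permits. The notion is meant
for finite-dimensional `V`. -/
def IsMaxSpan (V : Submodule F A) : Prop :=
  finrank F ↥(V * V) = (finrank F V + 1).choose 2

theorem isMaxSpan_span_range [Finite ι] {v : ι → A}
    (hv : LinearIndependent F fun z : Sym2 ι => (z.map v).mul) :
    IsMaxSpan (span F (Set.range v)) := by
  classical
  have := Fintype.ofFinite ι
  rw [IsMaxSpan, span_range_mul_span_range, finrank_span_eq_card hv,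
    finrank_span_eq_card (linearIndependent_of_sym2Mul hv), Sym2.card]

namespace IsMaxSpan

variable {V : Submodule F A}

theorem linearIndependent_sym2Mul_basis [Finite ι] (hV : IsMaxSpan V) (b : Basis ι F V) :
    LinearIndependent F fun z : Sym2 ι => (z.map fun i => (b i : A)).mul := by
  classical
  have := Fintype.ofFinite ι
  have hspan : span F (Set.range fun i => (b i : A)) = V := by
    rw [Set.range_comp' Subtype.val b, ← coe_subtype, span_image, b.span_eq, map_subtype_top]
  rw [linearIndependent_iff_card_eq_finrank_span, Set.finrank, ← span_range_mul_span_range, hspan,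
    hV, Sym2.card, finrank_eq_card_basis b]

theorem exists_dual_mul [FiniteDimensional F V] (hV : IsMaxSpan V) (φ : Dual F V) :
    ∃ Φ : Dual F A, ∀ u v : V, Φ (u * v) = φ u * φ v := by
  let b := finBasis F V
  have hli := hV.linearIndependent_sym2Mul_basis b
  obtain ⟨Φ, hΦ⟩ := LinearMap.exists_extend
    ((Basis.span hli).constr F fun z => (z.map fun i => φ (b i)).mul)
  have hΦb (i j) : Φ (b i * b j) = φ (b i) * φ (b j) := by
    have h := LinearMap.congr_fun hΦ (Basis.span hli s(i, j))
    rwa [Basis.constr_basis, LinearMap.comp_apply, subtype_apply, Basis.span_apply] at h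
  have hbilin : ((LinearMap.mul F A).compl₁₂ V.subtype V.subtype).compr₂ Φ =
      (LinearMap.mul F F).compl₁₂ φ φ := LinearMap.ext_basis b b hΦb
  exact ⟨Φ, LinearMap.congr_fun₂ hbilin⟩

end IsMaxSpan

theorem mem_span_singleton_or_of_forall_dual {E : Type*} [AddCommGroup E] [Module F E] {a c d : E}
    (h : ∀ φ : Dual F E, φ a = 0 → φ c = 0 ∨ φ d = 0) :
    c ∈ span F {a} ∨ d ∈ span F {a} := by
  have hunion : ((span F {a}).dualAnnihilator : Set (Dual F E)) ⊆
      (span F {c}).dualAnnihilator ∪ (span F {d}).dualAnnihilator := by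
    simpa [Set.subset_def, mem_dualAnnihilator, mem_span_singleton] using h
  simpa only [Subspace.dualAnnihilator_le_dualAnnihilator_iff, span_singleton_le_iff_mem] using
    AddSubgroupClass.subset_union.mp hunion

variable {K : Type*} [Field K] [Algebra F K]

theorem span_singleton_eq_of_mul_eq_mul {a b c d : K} (ha : a ≠ 0) (hc : c ≠ 0)
    (h : a * b = c * d) (hca : c ∈ span F {a}) :
    span F {a} = span F {c} ∧ span F {b} = span F {d} := by
  obtain ⟨r, rfl⟩ := mem_span_singleton.mp hca
  have hr : IsUnit r := IsUnit.mk0 r (left_ne_zero_of_smul hc)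
  have hb : b = r • d := mul_left_cancel₀ ha (by rw [h, smul_mul_assoc, mul_smul_comm])
  rw [hb, span_singleton_smul_eq hr, span_singleton_smul_eq hr]
  exact ⟨rfl, rfl⟩

theorem IsMaxSpan.isSidon {V : Submodule F K} [FiniteDimensional F V] (hV : IsMaxSpan V) :
    IsSidon V := by
  intro a haV b hbV c hcV d hdV ha _ hc hd h
  have hdual (φ : Dual F V) (hφ : φ ⟨a, haV⟩ = 0) : φ ⟨c, hcV⟩ = 0 ∨ φ ⟨d, hdV⟩ = 0 := by
    obtain ⟨Φ, hΦ⟩ := hV.exists_dual_mul φ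
    rw [← mul_eq_zero, ← hΦ ⟨c, hcV⟩ ⟨d, hdV⟩, ← h, hΦ ⟨a, haV⟩ ⟨b, hbV⟩, hφ, zero_mul]
  have hmem : c ∈ span F {a} ∨ d ∈ span F {a} := by
    simpa only [mem_span_singleton, Subtype.ext_iff, Submodule.coe_smul] using
      mem_span_singleton_or_of_forall_dual hdual
  rcases hmem with hca | hda
  · obtain ⟨hac, hbd⟩ := span_singleton_eq_of_mul_eq_mul ha hc h hca
    rw [hac, hbd]
  · obtain ⟨had, hbc⟩ := span_singleton_eq_of_mul_eq_mul ha hd (h.trans (mul_comm c d)) hda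
    rw [had, hbc, Set.pair_comm]

end Sidon

theorem sym2_eq_of_forall_mem {ι : Type*} {z w : Sym2 ι} (hwz : ∀ i ∈ w, i ∈ z)
    (hdiag : z.IsDiag ∨ ¬ w.IsDiag) : w = z := by
  induction w with | _ i j
  rw [Sym2.ball] at hwz
  by_cases hij : i = j
  · obtain ⟨l, rfl⟩ := hwz.1
    simp_all
  · exact ((Sym2.mem_and_mem_iff hij).mp hwz).symm

theorem coeff_eq_zero_of_not_dvd {F A κ : Type*} [Field F] [CommRing A] [Algebra F A] [Fintype κ]
    {x : κ → A} {g : κ → F} (hsum : ∑ l, g l • x l = 0) {π : A} {m : κ} (hm : ¬ π ∣ x m)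
    (hne : ∀ l ≠ m, g l = 0 ∨ π ∣ x l) : g m = 0 := by
  classical
  by_contra hgm
  have hrest : π ∣ ∑ l ∈ Finset.univ.erase m, g l • x l := Finset.dvd_sum fun l hl =>
    (hne l (Finset.ne_of_mem_erase hl)).elim (fun h => by simp [h]) (dvd_smul_of_dvd (g l))
  have hterm : π ∣ g m • x m := by
    rw [← Finset.add_sum_erase _ _ (Finset.mem_univ m)] at hsum
    rwa [eq_neg_of_add_eq_zero_left hsum, dvd_neg]
  exact hm (by simpa [smul_smul, hgm] using dvd_smul_of_dvd (g m)⁻¹ hterm)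

section ProdAvoiding

variable {M ι : Type*} [Fintype ι] [DecidableEq ι]

/-- The product `f i` of all `p z` over the unordered pairs `z` not containing `i`. The paper's
`p_{s,t}` with `t ≤ s` is `p s(s, t)`. -/
def prodAvoiding [CommMonoid M] (p : Sym2 ι → M) (i : ι) : M :=
  ∏ z with i ∉ z, p z

theorem dvd_prodAvoiding_iff [CommMonoidWithZero M] {p : Sym2 ι → M} {z : Sym2 ι}
    (hp : Prime (p z)) (hdvd : ∀ w, p z ∣ p w → z = w) {i : ι} :
    p z ∣ prodAvoiding p i ↔ i ∉ z := by
  rw [prodAvoiding, hp.dvd_finsetProd_iff]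
  constructor
  · rintro ⟨w, hw, hzw⟩
    rw [hdvd w hzw]
    simpa using hw
  · exact fun hi => ⟨z, by simpa using hi, dvd_rfl⟩

theorem dvd_sym2Mul_prodAvoiding_iff [CommMonoidWithZero M] {p : Sym2 ι → M} {z : Sym2 ι}
    (hp : Prime (p z)) (hdvd : ∀ w, p z ∣ p w → z = w) {w : Sym2 ι} :
    p z ∣ (w.map (prodAvoiding p)).mul ↔ ¬ ∀ i ∈ w, i ∈ z := by
  induction w with | _ i j
  rw [Sym2.map_mk, Sym2.mul_mk, hp.dvd_mul, dvd_prodAvoiding_iff hp hdvd,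
    dvd_prodAvoiding_iff hp hdvd, Sym2.ball, not_and_or]

theorem linearIndependent_sym2Mul_prodAvoiding {F A : Type*} [Field F] [CommRing A] [Algebra F A]
    {p : Sym2 ι → A} (hp : ∀ z, Prime (p z)) (hdvd : ∀ z w, p z ∣ p w → z = w) :
    LinearIndependent F fun z : Sym2 ι => (z.map (prodAvoiding p)).mul := by
  rw [Fintype.linearIndependent_iff]
  intro g hg
  have coeff_eq_zero (z : Sym2 ι) (hz : ∀ w ≠ z, g w = 0 ∨ z.IsDiag ∨ ¬ w.IsDiag) : g z = 0 := by
    have hself : ¬ p z ∣ (z.map (prodAvoiding p)).mul := by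
      simp [dvd_sym2Mul_prodAvoiding_iff (hp z) (hdvd z)]
    refine coeff_eq_zero_of_not_dvd hg hself fun w hwz => (hz w hwz).imp_right fun hdiag => ?_
    rw [dvd_sym2Mul_prodAvoiding_iff (hp z) (hdvd z)]
    exact fun hsub => hwz (sym2_eq_of_forall_mem hsub hdiag)
  have diag_eq_zero (z : Sym2 ι) (hz : z.IsDiag) : g z = 0 :=
    coeff_eq_zero z fun _ _ => Or.inr (Or.inl hz)
  exact fun z => coeff_eq_zero z fun w _ =>
    (em w.IsDiag).imp (diag_eq_zero w) Or.inr

theorem card_sym2_avoiding (i : ι) :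
    (Finset.univ.filter fun z : Sym2 ι => i ∉ z).card = (Fintype.card ι).choose 2 := by
  have hfilter : (Finset.univ.filter fun z : Sym2 ι => i ∉ z) = (Finset.univ.erase i).sym2 := by
    ext z
    simp only [Finset.mem_filter_univ, Finset.mem_sym2_iff, Finset.mem_erase, Finset.mem_univ,
      and_true]
    exact ⟨fun hi j hj hji => hi (hji ▸ hj), fun h hi => h i hi rfl⟩
  rw [hfilter, Finset.card_sym2, Finset.card_erase_add_one (Finset.mem_univ i), Finset.card_univ]

theorem natDegree_prodAvoiding_le {R : Type*} [CommSemiring R] {p : Sym2 ι → R[X]} {Δ : ℕ}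
    (hΔ : ∀ z, (p z).natDegree ≤ Δ) (i : ι) :
    (prodAvoiding p i).natDegree ≤ (Fintype.card ι).choose 2 * Δ :=
  calc (prodAvoiding p i).natDegree
      ≤ ∑ z with i ∉ z, (p z).natDegree := natDegree_prod_le _ _
    _ ≤ (Finset.univ.filter fun z : Sym2 ι => i ∉ z).card • Δ :=
        Finset.sum_le_card_nsmul _ _ Δ fun z _ => hΔ z
    _ = (Fintype.card ι).choose 2 * Δ := by rw [card_sym2_avoiding, smul_eq_mul]

theorem natDegree_sym2Mul_prodAvoiding_le {R : Type*} [CommSemiring R] {p : Sym2 ι → R[X]} {Δ : ℕ}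
    (hΔ : ∀ z, (p z).natDegree ≤ Δ) (z : Sym2 ι) :
    (z.map (prodAvoiding p)).mul.natDegree ≤ 2 * Δ * (Fintype.card ι).choose 2 := by
  induction z with | _ i j
  calc (prodAvoiding p i * prodAvoiding p j).natDegree
      ≤ (prodAvoiding p i).natDegree + (prodAvoiding p j).natDegree := natDegree_mul_le
    _ ≤ (Fintype.card ι).choose 2 * Δ + (Fintype.card ι).choose 2 * Δ :=
        add_le_add (natDegree_prodAvoiding_le hΔ i) (natDegree_prodAvoiding_le hΔ j)
    _ = 2 * Δ * (Fintype.card ι).choose 2 := by ring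

end ProdAvoiding

theorem prod_lowerTriangle_avoiding {M ι : Type*} [CommMonoid M] [Fintype ι] [LinearOrder ι]
    (P : ι → ι → M) (i : ι) :
    ∏ st : ι × ι with st.2 ≤ st.1 ∧ st.1 ≠ i ∧ st.2 ≠ i, P st.1 st.2 =
      prodAvoiding (fun z => P z.sup z.inf) i := by
  refine Finset.prod_bij' (fun st _ => s(st.1, st.2)) (fun z _ => (z.sup, z.inf)) ?_ ?_ ?_ ?_ ?_
  · rintro ⟨s, t⟩ hst
    simp_all [eq_comm]
  · rintro ⟨s, t⟩ hz
    rcases le_total s t with h | h <;> simp_all [eq_comm]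
  · rintro ⟨s, t⟩ hst
    simp_all
  · rintro ⟨s, t⟩ -
    rcases le_total s t with h | h <;> simp [h, Sym2.eq_swap]
  · rintro ⟨s, t⟩ hst
    simp_all

theorem sym2_mk_injective_lowerTriangle {ι : Type*} [LinearOrder ι] :
    Function.Injective fun st : {st : ι × ι // st.2 ≤ st.1} => s(st.1.1, st.1.2) := by
  rintro ⟨⟨s, t⟩, hts⟩ ⟨⟨s', t'⟩, hts'⟩ h
  have hsup : s = s' := by simpa [max_eq_left hts, max_eq_left hts'] using congrArg Sym2.sup h
  have hinf : t = t' := by simpa [min_eq_right hts, min_eq_right hts'] using congrArg Sym2.inf h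
  simp only [hsup, hinf]

theorem linearIndependent_aeval {R A κ : Type*} [CommRing R] [Ring A] [Algebra R A]
    {x : κ → R[X]} (hx : LinearIndependent R x) {m : ℕ} (hdeg : ∀ l, (x l).natDegree ≤ m) {γ : A}
    (hγ : ∀ g : R[X], g ≠ 0 → aeval γ g = 0 → m < g.natDegree) :
    LinearIndependent R fun l => aeval γ (x l) := by
  have hspan : span R (Set.range x) ≤ degreeLE R m := span_le.mpr <| by
    rintro _ ⟨l, rfl⟩
    exact mem_degreeLE.mpr (natDegree_le_iff_degree_le.mp (hdeg l))
  refine hx.map (f := (aeval γ).toLinearMap) (disjoint_def.mpr fun g hg hker => ?_)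
  by_contra hg0
  exact (hγ g hg0 hker).not_ge (natDegree_le_iff_degree_le.mpr (mem_degreeLE.mp (hspan hg)))

section FieldExtension

open IntermediateField

variable {F K : Type*} [Field F] [Field K] [Algebra F K] {γ : K}

variable (F) in
theorem adjoin_simple_eq_top_of_forall_subfield (hγ : ∀ E : Subfield K, γ ∈ E → E = ⊤) :
    F⟮γ⟯ = ⊤ :=
  toSubfield_injective (hγ F⟮γ⟯.toSubfield (mem_adjoin_simple_self F γ))

theorem finrank_le_natDegree_of_aeval_eq_zero [FiniteDimensional F K] (hγ : F⟮γ⟯ = ⊤) {g : F[X]}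
    (hg : g ≠ 0) (hroot : aeval γ g = 0) : finrank F K ≤ g.natDegree := by
  rw [← (Field.primitive_element_iff_minpoly_natDegree_eq F γ).mp hγ]
  exact natDegree_le_of_dvd (minpoly.dvd F γ hroot) hg

end FieldExtension

theorem stmt11_general {F K : Type*} [Field F] [Field K] [Algebra F K] {k Δ : ℕ}
    {P : Fin k → Fin k → F[X]}
    (hirr : ∀ s t, t ≤ s → Irreducible (P s t))
    (hdist : ∀ s t s' t', t ≤ s → t' ≤ s' → (s, t) ≠ (s', t') → ¬ Associated (P s t) (P s' t'))
    (hΔ : ∀ s t, t ≤ s → (P s t).natDegree ≤ Δ)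
    {f : Fin k → F[X]}
    (hf : ∀ i, f i = ∏ st : Fin k × Fin k with st.2 ≤ st.1 ∧ st.1 ≠ i ∧ st.2 ≠ i, P st.1 st.2)
    {γ : K} (hγ : ∀ g : F[X], g ≠ 0 → aeval γ g = 0 → 2 * Δ * (k * (k - 1) / 2) < g.natDegree) :
    LinearIndependent F
      (fun st : {st : Fin k × Fin k // st.2 ≤ st.1} => f st.1.1 * f st.1.2) ∧
    finrank F (span F (Set.range fun i => aeval γ (f i))) = k ∧
    IsSidon (span F (Set.range fun i => aeval γ (f i))) ∧
    finrank F ↥(span F (Set.range fun i => aeval γ (f i)) *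
      span F (Set.range fun i => aeval γ (f i))) = k * (k + 1) / 2 := by
  let p (z : Sym2 (Fin k)) : F[X] := P z.sup z.inf
  have hfp : f = prodAvoiding p := funext fun i => (hf i).trans (prod_lowerTriangle_avoiding P i)
  have hp (z) : Irreducible (p z) := hirr _ _ z.inf_le_sup
  have hdvd (z w) (h : p z ∣ p w) : z = w := by
    by_contra hzw
    refine hdist _ _ _ _ z.inf_le_sup w.inf_le_sup (fun hpair => hzw ?_)
      ((hp z).associated_of_dvd (hp w) h)
    exact Sym2.inf_eq_inf_and_sup_eq_sup.mp (Prod.ext_iff.mp hpair).symm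
  have hpoly : LinearIndependent F fun z : Sym2 (Fin k) => (z.map f).mul :=
    hfp ▸ linearIndependent_sym2Mul_prodAvoiding (fun z => (hp z).prime) hdvd
  have hdeg (z : Sym2 (Fin k)) : (z.map f).mul.natDegree ≤ 2 * Δ * (k * (k - 1) / 2) := by
    simpa only [hfp, Fintype.card_fin, Nat.choose_two_right] using
      natDegree_sym2Mul_prodAvoiding_le (fun z => hΔ _ _ z.inf_le_sup) z
  have heval : LinearIndependent F fun z : Sym2 (Fin k) => (z.map fun i => aeval γ (f i)).mul := by
    simpa only [map_sym2Mul] using linearIndependent_aeval hpoly hdeg hγ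
  have hdim := finrank_span_eq_card (linearIndependent_of_sym2Mul heval)
  rw [Fintype.card_fin] at hdim
  have hmax := isMaxSpan_span_range heval
  have := FiniteDimensional.span_of_finite F (Set.finite_range fun i => aeval γ (f i))
  refine ⟨?_, hdim, hmax.isSidon, ?_⟩
  · simpa only [Function.comp_def, Sym2.map_mk, Sym2.mul_mk] using
      hpoly.comp _ sym2_mk_injective_lowerTriangle
  · rw [hmax, hdim, Nat.choose_two_right, Nat.add_sub_cancel, mul_comm]

theorem stmt11 {F K : Type*} [Field F] [Fintype F] [Field K] [Fintype K] [Algebra F K]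
    (q n k Δ : ℕ) (hq : q = Fintype.card F) (hcard : Fintype.card K = q ^ n)
    (hk : 1 ≤ k)
    (P : Fin k → Fin k → Polynomial F)
    (hmonic : ∀ s t : Fin k, t ≤ s → (P s t).Monic)
    (hirr : ∀ s t : Fin k, t ≤ s → Irreducible (P s t))
    (hdist : ∀ s t s' t' : Fin k, t ≤ s → t' ≤ s' → (s, t) ≠ (s', t') → P s t ≠ P s' t')
    (hΔ : ∀ s t : Fin k, t ≤ s → (P s t).natDegree ≤ Δ)
    (f : Fin k → Polynomial F)
    (hf : ∀ i : Fin k, f i =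
      ∏ st ∈ Finset.univ.filter
        (fun st : Fin k × Fin k => st.2 ≤ st.1 ∧ st.1 ≠ i ∧ st.2 ≠ i), P st.1 st.2)
    (hn : 2 * Δ * (k * (k - 1) / 2) < n)
    (γ : K) (hγ : ∀ E : Subfield K, γ ∈ E → E = ⊤) :
    LinearIndependent F
      (fun st : {st : Fin k × Fin k // st.2 ≤ st.1} => f st.1.1 * f st.1.2) ∧
    Module.finrank F
      ↥(Submodule.span F (Set.range fun i => Polynomial.aeval γ (f i))) = k ∧
    IsSidon (Submodule.span F (Set.range fun i => Polynomial.aeval γ (f i))) ∧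
    Module.finrank F
      ↥(Submodule.span F (Set.range fun i => Polynomial.aeval γ (f i)) *
        Submodule.span F (Set.range fun i => Polynomial.aeval γ (f i))) =
      k * (k + 1) / 2 := by
  subst hq
  have hfinrank : finrank F K = n :=
    Nat.pow_right_injective Fintype.one_lt_card (card_eq_pow_finrank.symm.trans hcard)
  have hγtop := adjoin_simple_eq_top_of_forall_subfield F hγ
  exact stmt11_general hirr
    (fun s t s' t' hts hts' hne hassoc => hdist s t s' t' hts hts' hne
      (eq_of_monic_of_associated (hmonic s t hts) (hmonic s' t' hts') hassoc))
    hΔ hf fun g hg hroot =>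
      hn.trans_le (hfinrank ▸ finrank_le_natDegree_of_aeval_eq_zero hγtop hg hroot)
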